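/- arXiv:2209.14124 — 3 statements merged into one kernel-verified Lean document; each statement's English description precedes it below -/
import Mathlib

section
/- There exists a constant C > 0, independent of x₁ and Δx, such that for all x ∈ (x₁, x₁ + Δx) one has |W′(x)| ≤ C/Δx and |W″(x)| ≤ C/Δx². Moreover, on the subinterval (x₁, x₁ + Δx/3) the sharper bound |W′(x)| < 5/Δx holds. -/
/-!
By the affine change of variable `t = (x - x₁) / Δx`, which accounts for the powers of `Δx`, it
suffices to treat `W 0 1` on `(0, 1)`. There `W 0 1 t = sigmoid (q - p)` with `p = t⁻¹` and
`q = (1 - t)⁻¹`. Since `p⁻¹ + q⁻¹ = 1`, the smaller of `p` and `q` is at most `2`, so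
`max p q ≤ |p - q| + 2`. The first two derivatives of `sigmoid` at `q - p` are at most
`exp (-|p - q|) ≤ exp 2 * exp (-max p q)`, which beats the polynomials in `p` and `q` produced by
the chain rule.
-/

open Real

noncomputable def W (x₁ Δx : ℝ) (x : ℝ) : ℝ :=
  if x ≤ x₁ then 0
  else if x < x₁ + Δx then
    1 / (Real.exp (Δx / (x - x₁) + Δx / (x - x₁ - Δx)) + 1)
  else 1

section OrderedRing

variable {R : Type*} [Ring R] [LinearOrder R] [IsOrderedRing R] {p q : R}

lemma pow_add_pow_le_two_mul_max_pow (hp : 0 ≤ p) (hq : 0 ≤ q) (n : ℕ) :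
    p ^ n + q ^ n ≤ 2 * max p q ^ n := by
  rw [two_mul]
  gcongr
  exacts [le_max_left p q, le_max_right p q]

lemma abs_pow_sub_pow_le_max_pow (hp : 0 ≤ p) (hq : 0 ≤ q) (n : ℕ) :
    |p ^ n - q ^ n| ≤ max p q ^ n := by
  have hp_le : p ^ n ≤ max p q ^ n := pow_le_pow_left₀ hp (le_max_left p q) n
  have hq_le : q ^ n ≤ max p q ^ n := pow_le_pow_left₀ hq (le_max_right p q) n
  exact abs_sub_le_of_nonneg_of_le (pow_nonneg hp n) hp_le (pow_nonneg hq n) hq_le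

end OrderedRing

lemma deriv_comp_sub_div_const {𝕜 : Type*} [NontriviallyNormedField 𝕜] (f : 𝕜 → 𝕜) (a c : 𝕜) :
    deriv (fun x => f ((x - a) / c)) = fun x => deriv f ((x - a) / c) / c := by
  funext x
  rw [deriv_comp_sub_const (fun y => f (y / c))]
  simp only [div_eq_inv_mul, deriv_comp_mul_left, smul_eq_mul]

lemma deriv_sigmoid_pos (x : ℝ) : 0 < deriv sigmoid x := by
  rw [deriv_sigmoid]
  exact mul_pos (sigmoid_pos x) (sub_pos.mpr (sigmoid_lt_one x))

lemma deriv_sigmoid_le_exp_neg_abs (x : ℝ) : deriv sigmoid x ≤ exp (-|x|) := by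
  have even : sigmoid x * sigmoid (-x) = sigmoid |x| * sigmoid (-|x|) := by
    rcases abs_choice x with h | h <;> rw [h]
    rw [neg_neg, mul_comm]
  calc deriv sigmoid x = sigmoid |x| * sigmoid (-|x|) := by rw [deriv_sigmoid, ← even, sigmoid_neg]
    _ ≤ sigmoid (-|x|) := mul_le_of_le_one_left (sigmoid_nonneg _) (sigmoid_le_one _)
    _ = sigmoid |x| * exp (-|x|) := (sigmoid_mul_rexp_neg _).symm
    _ ≤ exp (-|x|) := mul_le_of_le_one_left (exp_pos _).le (sigmoid_le_one _)

lemma hasDerivAt_deriv_sigmoid (x : ℝ) :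
    HasDerivAt (deriv sigmoid) (deriv sigmoid x * (1 - 2 * sigmoid x)) x := by
  have hs := hasDerivAt_sigmoid x
  rw [deriv_sigmoid]
  exact (hs.fun_mul (hs.const_sub 1)).congr_deriv (by ring)

lemma abs_deriv_deriv_sigmoid_le_deriv_sigmoid (x : ℝ) :
    |deriv (deriv sigmoid) x| ≤ deriv sigmoid x := by
  have factor_le : |1 - 2 * sigmoid x| ≤ 1 :=
    abs_le.mpr ⟨by linarith [sigmoid_le_one x], by linarith [sigmoid_nonneg x]⟩
  rw [(hasDerivAt_deriv_sigmoid x).deriv, abs_mul, abs_of_pos (deriv_sigmoid_pos x)]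
  exact mul_le_of_le_one_right (deriv_sigmoid_pos x).le factor_le

section HolderConjugate

variable {p q : ℝ}

lemma min_le_two_of_holderConjugate (h : p.HolderConjugate q) : min p q ≤ 2 := by
  by_contra! hlt
  obtain ⟨hp, hq⟩ := lt_min_iff.mp hlt
  nlinarith [h.mul_eq_add]

lemma max_le_abs_sub_add_two_of_holderConjugate (h : p.HolderConjugate q) :
    max p q ≤ |p - q| + 2 := by
  linarith [max_sub_min_eq_abs' p q, min_le_two_of_holderConjugate h]

lemma max_pow_mul_exp_neg_abs_sub_le (h : p.HolderConjugate q) (n : ℕ) :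
    max p q ^ n * exp (-|p - q|) ≤ exp 2 * n.factorial := by
  have hmax : 0 ≤ max p q := h.nonneg.trans (le_max_left p q)
  have pow_le : max p q ^ n ≤ exp (max p q) * n.factorial :=
    (div_le_iff₀ (by positivity)).mp (pow_div_factorial_le_exp _ hmax n)
  calc max p q ^ n * exp (-|p - q|)
      ≤ exp (max p q) * n.factorial * exp (-|p - q|) := by gcongr
    _ = exp (max p q - |p - q|) * n.factorial := by
      rw [sub_eq_add_neg (max p q), exp_add, mul_right_comm]
    _ ≤ exp 2 * n.factorial := by
      gcongr
      linarith [max_le_abs_sub_add_two_of_holderConjugate h]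

lemma sq_add_sq_lt_five_mul_exp_sub (h : p.HolderConjugate q) (hp : 3 ≤ p) :
    p ^ 2 + q ^ 2 < 5 * exp (p - q) := by
  have hq_pos : 0 < q := h.symm.pos
  have hq : q ≤ 3 / 2 := by nlinarith [h.mul_eq_add]
  have hq_sq : q ^ 2 ≤ p ^ 2 / 4 := by nlinarith
  calc p ^ 2 + q ^ 2 ≤ 5 * (p ^ 2 / 4) := by linarith
    _ < 5 * (1 + (p - 3 / 2) + (p - 3 / 2) ^ 2 / 2) := by nlinarith
    _ ≤ 5 * exp (p - 3 / 2) := by gcongr; exact quadratic_le_exp_of_nonneg (by linarith)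
    _ ≤ 5 * exp (p - q) := by gcongr

end HolderConjugate

/-- The function `-y` of the transition on the unit interval (`x₁ = 0`, `Δx = 1`), with the sign
for which the transition function is its composition with the increasing `sigmoid`. -/
noncomputable def transitionPhase (t : ℝ) : ℝ := (1 - t)⁻¹ - t⁻¹

lemma abs_transitionPhase (t : ℝ) : |transitionPhase t| = |t⁻¹ - (1 - t)⁻¹| := abs_sub_comm _ _

lemma W_eq_W_zero_one_comp {Δx : ℝ} (x₁ : ℝ) (hΔx : 0 < Δx) :
    W x₁ Δx = fun x => W 0 1 ((x - x₁) / Δx) := by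
  funext x
  have left_iff : (x - x₁) / Δx ≤ 0 ↔ x ≤ x₁ := by rw [div_le_iff₀ hΔx, zero_mul, sub_nonpos]
  have right_iff : (x - x₁) / Δx < 0 + 1 ↔ x < x₁ + Δx := by
    rw [zero_add, div_lt_one hΔx, sub_lt_iff_lt_add']
  have sub_one : (x - x₁) / Δx - 1 = (x - x₁ - Δx) / Δx := by field_simp
  simp only [W, left_iff, right_iff, sub_zero, sub_one, one_div_div]

lemma deriv_W {Δx : ℝ} (x₁ : ℝ) (hΔx : 0 < Δx) :
    deriv (W x₁ Δx) = fun x => deriv (W 0 1) ((x - x₁) / Δx) / Δx := by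
  rw [W_eq_W_zero_one_comp x₁ hΔx, deriv_comp_sub_div_const]

lemma deriv_deriv_W {Δx : ℝ} (x₁ : ℝ) (hΔx : 0 < Δx) :
    deriv (deriv (W x₁ Δx)) = fun x => deriv (deriv (W 0 1)) ((x - x₁) / Δx) / Δx ^ 2 := by
  funext x
  rw [deriv_W x₁ hΔx, deriv_div_const, deriv_comp_sub_div_const, div_div, sq]

section UnitInterval

variable {t : ℝ}

lemma W_zero_one_eq_sigmoid (ht : t ∈ Set.Ioo (0 : ℝ) 1) :
    W 0 1 t = sigmoid (transitionPhase t) := by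
  have exponent : 1 / (t - 0) + 1 / (t - 0 - 1) = -transitionPhase t := by
    rw [transitionPhase, sub_zero, ← neg_sub 1 t, one_div, one_div, inv_neg]
    ring
  rw [W, if_neg ht.1.not_ge, if_pos (by simpa only [zero_add] using ht.2), exponent, sigmoid_def,
    one_div, add_comm]

lemma hasDerivAt_transitionPhase (ht₀ : t ≠ 0) (ht₁ : t ≠ 1) :
    HasDerivAt transitionPhase (t⁻¹ ^ 2 + (1 - t)⁻¹ ^ 2) t := by
  have inv_sub := ((hasDerivAt_id t).const_sub 1).fun_inv (sub_ne_zero.mpr ht₁.symm)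
  refine (inv_sub.fun_sub (hasDerivAt_inv ht₀)).congr_deriv ?_
  simp only [id_eq, neg_neg, one_div, inv_pow]
  ring

lemma hasDerivAt_inv_sq_add_inv_one_sub_sq (ht₀ : t ≠ 0) (ht₁ : t ≠ 1) :
    HasDerivAt (fun t : ℝ => t⁻¹ ^ 2 + (1 - t)⁻¹ ^ 2) (2 * ((1 - t)⁻¹ ^ 3 - t⁻¹ ^ 3)) t := by
  have inv_sub := ((hasDerivAt_id t).const_sub 1).fun_inv (sub_ne_zero.mpr ht₁.symm)
  refine (((hasDerivAt_inv ht₀).fun_pow 2).fun_add (inv_sub.fun_pow 2)).congr_deriv ?_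
  simp only [id_eq, neg_neg, one_div, ← inv_pow]
  ring

lemma hasDerivAt_W_zero_one (ht : t ∈ Set.Ioo (0 : ℝ) 1) :
    HasDerivAt (W 0 1) (deriv sigmoid (transitionPhase t) * (t⁻¹ ^ 2 + (1 - t)⁻¹ ^ 2)) t := by
  have eq_near : W 0 1 =ᶠ[nhds t] sigmoid ∘ transitionPhase := by
    filter_upwards [isOpen_Ioo.mem_nhds ht] with u hu using W_zero_one_eq_sigmoid hu
  have outer := (differentiable_sigmoid (transitionPhase t)).hasDerivAt
  exact (outer.comp t (hasDerivAt_transitionPhase ht.1.ne' ht.2.ne)).congr_of_eventuallyEq eq_near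

lemma hasDerivAt_deriv_W_zero_one (ht : t ∈ Set.Ioo (0 : ℝ) 1) :
    HasDerivAt (deriv (W 0 1))
      (deriv (deriv sigmoid) (transitionPhase t) * (t⁻¹ ^ 2 + (1 - t)⁻¹ ^ 2) ^ 2 +
        deriv sigmoid (transitionPhase t) * (2 * ((1 - t)⁻¹ ^ 3 - t⁻¹ ^ 3))) t := by
  have eq_near : deriv (W 0 1) =ᶠ[nhds t]
      fun u => (deriv sigmoid ∘ transitionPhase) u * (u⁻¹ ^ 2 + (1 - u)⁻¹ ^ 2) := by
    filter_upwards [isOpen_Ioo.mem_nhds ht] with u hu using (hasDerivAt_W_zero_one hu).deriv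
  have outer := (hasDerivAt_deriv_sigmoid (transitionPhase t)).differentiableAt.hasDerivAt
  have product := (outer.comp t (hasDerivAt_transitionPhase ht.1.ne' ht.2.ne)).fun_mul
    (hasDerivAt_inv_sq_add_inv_one_sub_sq ht.1.ne' ht.2.ne)
  refine (product.congr_of_eventuallyEq eq_near).congr_deriv ?_
  rw [Function.comp_apply]
  ring

lemma abs_deriv_W_zero_one_le_exp_mul (ht : t ∈ Set.Ioo (0 : ℝ) 1) :
    |deriv (W 0 1) t| ≤ exp (-|t⁻¹ - (1 - t)⁻¹|) * (t⁻¹ ^ 2 + (1 - t)⁻¹ ^ 2) := by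
  have sum_nonneg : 0 ≤ t⁻¹ ^ 2 + (1 - t)⁻¹ ^ 2 := by positivity
  rw [(hasDerivAt_W_zero_one ht).deriv, abs_mul, abs_of_pos (deriv_sigmoid_pos _),
    abs_of_nonneg sum_nonneg, ← abs_transitionPhase]
  gcongr
  exact deriv_sigmoid_le_exp_neg_abs _

lemma abs_deriv_deriv_W_zero_one_le_exp_mul (ht : t ∈ Set.Ioo (0 : ℝ) 1) :
    |deriv (deriv (W 0 1)) t| ≤ exp (-|t⁻¹ - (1 - t)⁻¹|) *
      ((t⁻¹ ^ 2 + (1 - t)⁻¹ ^ 2) ^ 2 + 2 * |t⁻¹ ^ 3 - (1 - t)⁻¹ ^ 3|) := by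
  have first_le := deriv_sigmoid_le_exp_neg_abs (transitionPhase t)
  have second_le := (abs_deriv_deriv_sigmoid_le_deriv_sigmoid (transitionPhase t)).trans first_le
  rw [(hasDerivAt_deriv_W_zero_one ht).deriv, ← abs_transitionPhase, mul_add]
  refine (abs_add_le _ _).trans (add_le_add ?_ ?_)
  · rw [abs_mul, abs_sq]
    gcongr
  · rw [abs_mul, abs_mul, abs_two, abs_of_pos (deriv_sigmoid_pos _), abs_sub_comm]
    gcongr

lemma abs_deriv_W_zero_one_le (ht : t ∈ Set.Ioo (0 : ℝ) 1) :
    |deriv (W 0 1) t| ≤ 4 * exp 2 := by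
  have hconj := HolderConjugate.inv_one_sub_inv ht.1 ht.2
  have sum_le := pow_add_pow_le_two_mul_max_pow hconj.nonneg hconj.symm.nonneg 2
  have decay := max_pow_mul_exp_neg_abs_sub_le hconj 2
  refine (abs_deriv_W_zero_one_le_exp_mul ht).trans ?_
  set p := t⁻¹
  set q := (1 - t)⁻¹
  calc exp (-|p - q|) * (p ^ 2 + q ^ 2)
      ≤ exp (-|p - q|) * (2 * max p q ^ 2) := by gcongr
    _ = 2 * (max p q ^ 2 * exp (-|p - q|)) := by ring
    _ ≤ 2 * (exp 2 * Nat.factorial 2) := by gcongr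
    _ = 4 * exp 2 := by simp only [Nat.factorial]; push_cast; ring

lemma abs_deriv_deriv_W_zero_one_le (ht : t ∈ Set.Ioo (0 : ℝ) 1) :
    |deriv (deriv (W 0 1)) t| ≤ 108 * exp 2 := by
  have hconj := HolderConjugate.inv_one_sub_inv ht.1 ht.2
  have sum_le := pow_add_pow_le_two_mul_max_pow hconj.nonneg hconj.symm.nonneg 2
  have diff_le := abs_pow_sub_pow_le_max_pow hconj.nonneg hconj.symm.nonneg 3
  have cubic_decay := max_pow_mul_exp_neg_abs_sub_le hconj 3
  have quartic_decay := max_pow_mul_exp_neg_abs_sub_le hconj 4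
  refine (abs_deriv_deriv_W_zero_one_le_exp_mul ht).trans ?_
  set p := t⁻¹
  set q := (1 - t)⁻¹
  calc exp (-|p - q|) * ((p ^ 2 + q ^ 2) ^ 2 + 2 * |p ^ 3 - q ^ 3|)
      ≤ exp (-|p - q|) * ((2 * max p q ^ 2) ^ 2 + 2 * max p q ^ 3) := by gcongr
    _ = 4 * (max p q ^ 4 * exp (-|p - q|)) + 2 * (max p q ^ 3 * exp (-|p - q|)) := by ring
    _ ≤ 4 * (exp 2 * Nat.factorial 4) + 2 * (exp 2 * Nat.factorial 3) := by gcongr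
    _ = 108 * exp 2 := by simp only [Nat.factorial]; push_cast; ring

lemma abs_deriv_W_zero_one_lt_five (ht : t ∈ Set.Ioo (0 : ℝ) (1 / 3)) :
    |deriv (W 0 1) t| < 5 := by
  have ht' : t ∈ Set.Ioo (0 : ℝ) 1 := ⟨ht.1, ht.2.trans (by norm_num)⟩
  have hconj := HolderConjugate.inv_one_sub_inv ht'.1 ht'.2
  have three_le : 3 ≤ t⁻¹ := (le_inv_comm₀ three_pos ht.1).mpr (by simpa using ht.2.le)
  have sum_lt := sq_add_sq_lt_five_mul_exp_sub hconj three_le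
  refine (abs_deriv_W_zero_one_le_exp_mul ht').trans_lt ?_
  set p := t⁻¹
  set q := (1 - t)⁻¹
  have q_le_p : q ≤ p := by nlinarith [hconj.mul_eq_add, hconj.symm.pos]
  calc exp (-|p - q|) * (p ^ 2 + q ^ 2)
      < exp (-|p - q|) * (5 * exp (p - q)) := by gcongr
    _ = 5 := by rw [abs_of_nonneg (sub_nonneg.mpr q_le_p), mul_left_comm, ← exp_add,
        neg_add_cancel, exp_zero, mul_one]

end UnitInterval

theorem W_deriv_bounds :
    ∃ C : ℝ, 0 < C ∧
      ∀ x₁ Δx : ℝ, 0 < Δx →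
        (∀ x ∈ Set.Ioo x₁ (x₁ + Δx),
          |deriv (W x₁ Δx) x| ≤ C / Δx ∧
          |deriv (deriv (W x₁ Δx)) x| ≤ C / Δx ^ 2) ∧
        (∀ x ∈ Set.Ioo x₁ (x₁ + Δx / 3),
          |deriv (W x₁ Δx) x| < 5 / Δx) := by
  refine ⟨108 * exp 2, by positivity, fun x₁ Δx hΔx => ?_⟩
  have rescale {c x : ℝ} (hx : x ∈ Set.Ioo x₁ (x₁ + Δx * c)) : (x - x₁) / Δx ∈ Set.Ioo 0 c :=
    ⟨div_pos (sub_pos.mpr hx.1) hΔx, (div_lt_iff₀' hΔx).mpr (sub_lt_iff_lt_add'.mpr hx.2)⟩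
  rw [deriv_deriv_W x₁ hΔx, deriv_W x₁ hΔx]
  simp only [abs_div, abs_pow, abs_of_pos hΔx]
  refine ⟨fun x hx => ?_, fun x hx => ?_⟩
  · have ht := rescale (c := 1) (by rwa [mul_one])
    have first_le : |deriv (W 0 1) ((x - x₁) / Δx)| ≤ 108 * exp 2 :=
      (abs_deriv_W_zero_one_le ht).trans (by gcongr; norm_num)
    have second_le := abs_deriv_deriv_W_zero_one_le ht
    constructor <;> gcongr
  · have ht := rescale (c := 1 / 3) (by rwa [mul_one_div])
    gcongr
    exact abs_deriv_W_zero_one_lt_five ht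
end

section
/- There exists a constant C > 0, independent of x₁, Δx, ε and f₃, such that the following holds: if f₃ : ℝ → ℝ is twice continuously differentiable with f₃(x₁) = 0, f₃′(x₁) = 0 and |f₃″(x)| ≤ ε for all x ∈ [x₁, x₁ + Δx], then the function f = f₃·W satisfies |f(x)| ≤ C·ε·Δx², |f′(x)| ≤ C·ε·Δx and |f″(x)| ≤ C·ε for all x ∈ (x₁, x₁ + Δx). -/
/-!
The norm `max (‖f x‖, d ‖f' x‖, d² ‖f'' x‖)` is scale invariant and, up to a factor `4`,
submultiplicative. On the scale `d = Δx` it is at most `ε Δx²` for `f₃`, by applying the mean value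
inequality twice from `x₁`, and for `W` it equals, after the rescaling `t = (x - x₁) / Δx`, the norm
on the scale `1` of one fixed function on `(0, 1)`.

That function is `σ ∘ u`, with `σ` the sigmoid and `u t = 1 / (1 - t) - 1 / t`. One of `t`, `1 - t`
is at least `1 / 2`, so `1 / t` and `1 / (1 - t)` are both at most `|u t| + 2`, and the derivatives
of `u` grow polynomially in `|u|`. The derivatives of `σ ∘ u` contain the factor
`σ' = σ (1 - σ) ≤ exp (-|u|)`, which absorbs this growth.
-/

open Real

open Set Filter Topology
open scoped Nat

section ScaledBound

variable {E : Type*} [NormedAddCommGroup E] [NormedSpace ℝ E]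

lemma mul_mul_norm_smul_le {A B a s t : ℝ} {v : E} (hA : 0 ≤ A) (ht : 0 ≤ t)
    (ha : s * ‖a‖ ≤ A) (hv : t * ‖v‖ ≤ B) : s * t * ‖a • v‖ ≤ A * B := by
  calc s * t * ‖a • v‖ = (s * ‖a‖) * (t * ‖v‖) := by rw [norm_smul]; ring
    _ ≤ A * B := mul_le_mul ha hv (by positivity) hA

/-- `f` is twice differentiable at `x`, and its pointwise `C²` norm there, made scale invariant by
the weights `1`, `d`, `d²`, is at most `A`. Differentiability is included so that the bounds on
`deriv` are not about junk values. -/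
structure HasScaledC2BoundAt (d A : ℝ) (f : ℝ → E) (x : ℝ) : Prop where
  eventually_differentiableAt : ∀ᶠ y in 𝓝 x, DifferentiableAt ℝ f y
  differentiableAt_deriv : DifferentiableAt ℝ (deriv f) x
  norm_le : ‖f x‖ ≤ A
  mul_norm_deriv_le : d * ‖deriv f x‖ ≤ A
  sq_mul_norm_deriv_deriv_le : d ^ 2 * ‖deriv (deriv f) x‖ ≤ A

namespace HasScaledC2BoundAt

variable {c d A B : ℝ} {f g f' : ℝ → E} {f'' : E} {w : ℝ → ℝ} {x : ℝ}

lemma of_hasDerivAt (hf : ∀ᶠ y in 𝓝 x, HasDerivAt f (f' y) y) (hf' : HasDerivAt f' f'' x)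
    (h₀ : ‖f x‖ ≤ A) (h₁ : d * ‖f' x‖ ≤ A) (h₂ : d ^ 2 * ‖f''‖ ≤ A) :
    HasScaledC2BoundAt d A f x := by
  have deriv_eq : deriv f =ᶠ[𝓝 x] f' := hf.mono fun y hy => hy.deriv
  have hasDerivAt_deriv : HasDerivAt (deriv f) f'' x := hf'.congr_of_eventuallyEq deriv_eq
  exact
    { eventually_differentiableAt := hf.mono fun y hy => hy.differentiableAt
      differentiableAt_deriv := hasDerivAt_deriv.differentiableAt
      norm_le := h₀
      mul_norm_deriv_le := by rwa [deriv_eq.eq_of_nhds]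
      sq_mul_norm_deriv_deriv_le := by rwa [hasDerivAt_deriv.deriv] }

lemma eventually_hasDerivAt (hf : HasScaledC2BoundAt d A f x) :
    ∀ᶠ y in 𝓝 x, HasDerivAt f (deriv f y) y :=
  hf.eventually_differentiableAt.mono fun _ hy => hy.hasDerivAt

lemma hasDerivAt_deriv (hf : HasScaledC2BoundAt d A f x) :
    HasDerivAt (deriv f) (deriv (deriv f) x) x :=
  hf.differentiableAt_deriv.hasDerivAt

lemma congr_of_eventuallyEq (hf : HasScaledC2BoundAt d A f x) (hfg : g =ᶠ[𝓝 x] f) :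
    HasScaledC2BoundAt d A g x :=
  of_hasDerivAt
    (by filter_upwards [hf.eventually_hasDerivAt, hfg.eventuallyEq_nhds] with y hy hfgy
        exact hy.congr_of_eventuallyEq hfgy)
    hf.hasDerivAt_deriv (hfg.eq_of_nhds ▸ hf.norm_le) hf.mul_norm_deriv_le
    hf.sq_mul_norm_deriv_deriv_le

lemma comp_sub_div {a : ℝ} (hd : 0 < d) (hf : HasScaledC2BoundAt c A f ((x - a) / d)) :
    HasScaledC2BoundAt (c * d) A (fun y => f ((y - a) / d)) x := by
  have hasDerivAt_rescale (y : ℝ) : HasDerivAt (fun y => (y - a) / d) d⁻¹ y := by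
    simpa only [one_div] using ((hasDerivAt_id' y).sub_const a).div_const d
  have norm_inv : ‖d⁻¹‖ = d⁻¹ := norm_of_nonneg (inv_nonneg.2 hd.le)
  refine of_hasDerivAt
    ((hasDerivAt_rescale x).continuousAt.eventually hf.eventually_hasDerivAt |>.mono
      fun y hy => hy.scomp y (hasDerivAt_rescale y))
    ((hf.hasDerivAt_deriv.scomp x (hasDerivAt_rescale x)).const_smul d⁻¹) hf.norm_le ?_ ?_
  · convert hf.mul_norm_deriv_le using 1
    rw [norm_smul, norm_inv, Function.comp_apply]
    field_simp
  · convert hf.sq_mul_norm_deriv_deriv_le using 1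
    rw [norm_smul, norm_smul, norm_inv]
    field_simp

lemma smul (hd : 0 ≤ d) (hw : HasScaledC2BoundAt d A w x) (hf : HasScaledC2BoundAt d B f x) :
    HasScaledC2BoundAt d (4 * A * B) (fun y => w y • f y) x := by
  have hA : 0 ≤ A := (norm_nonneg _).trans hw.norm_le
  have hB : 0 ≤ B := (norm_nonneg _).trans hf.norm_le
  have hw₀ : 1 * ‖w x‖ ≤ A := (one_mul _).trans_le hw.norm_le
  have hf₀ : 1 * ‖f x‖ ≤ B := (one_mul _).trans_le hf.norm_le
  have hd₂ : 0 ≤ d ^ 2 := sq_nonneg d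
  -- `hᵢⱼ` bounds the product of the `i`-th derivative of `w` and the `j`-th derivative of `f`.
  have h₀₀ := mul_mul_norm_smul_le hA zero_le_one hw₀ hf₀
  have h₀₁ := mul_mul_norm_smul_le hA hd hw₀ hf.mul_norm_deriv_le
  have h₁₀ := mul_mul_norm_smul_le hA zero_le_one hw.mul_norm_deriv_le hf₀
  have h₀₂ := mul_mul_norm_smul_le hA hd₂ hw₀ hf.sq_mul_norm_deriv_deriv_le
  have h₁₁ := mul_mul_norm_smul_le hA hd hw.mul_norm_deriv_le hf.mul_norm_deriv_le
  have h₂₀ := mul_mul_norm_smul_le hA zero_le_one hw.sq_mul_norm_deriv_deriv_le hf₀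
  refine of_hasDerivAt
    (by filter_upwards [hw.eventually_hasDerivAt, hf.eventually_hasDerivAt] with y hwy hfy
        exact hwy.smul hfy)
    ((hw.eventually_hasDerivAt.self_of_nhds.smul hf.hasDerivAt_deriv).add
      (hw.hasDerivAt_deriv.smul hf.eventually_hasDerivAt.self_of_nhds)) ?_ ?_ ?_
  · linarith [mul_nonneg hA hB]
  · have triangle := mul_le_mul_of_nonneg_left (norm_add_le (w x • deriv f x) (deriv w x • f x)) hd
    simp only [Pi.add_apply, Pi.smul_apply']
    linarith [mul_nonneg hA hB]
  · have triangle := mul_le_mul_of_nonneg_left (norm_add₄_le (a := w x • deriv (deriv f) x)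
      (b := deriv w x • deriv f x) (c := deriv w x • deriv f x)
      (d := deriv (deriv w) x • f x)) hd₂
    rw [← add_assoc]
    linarith

end HasScaledC2BoundAt

variable {a d ε : ℝ} {f f' f'' : ℝ → E}

lemma norm_le_mul_of_norm_hasDerivWithinAt_le
    (hf : ∀ x ∈ Ico a (a + d), HasDerivWithinAt f (f' x) (Ico a (a + d)) x) (ha : f a = 0)
    (bound : ∀ x ∈ Ico a (a + d), ‖f' x‖ ≤ ε) : ∀ x ∈ Ico a (a + d), ‖f x‖ ≤ ε * d := by
  intro x hx
  have hε : 0 ≤ ε := (norm_nonneg _).trans (bound x hx)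
  calc ‖f x‖ = ‖f x - f a‖ := by rw [ha, sub_zero]
    _ ≤ ε * ‖x - a‖ := (convex_Ico a (a + d)).norm_image_sub_le_of_norm_hasDerivWithin_le hf bound
        ⟨le_rfl, hx.1.trans_lt hx.2⟩ hx
    _ = ε * (x - a) := by rw [norm_of_nonneg (sub_nonneg.2 hx.1)]
    _ ≤ ε * d := by gcongr; linarith [hx.2]

lemma hasScaledC2BoundAt_of_norm_hasDerivWithinAt_le
    (hf : ∀ x ∈ Ico a (a + d), HasDerivWithinAt f (f' x) (Ico a (a + d)) x)
    (hf' : ∀ x ∈ Ico a (a + d), HasDerivWithinAt f' (f'' x) (Ico a (a + d)) x)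
    (ha : f a = 0) (ha' : f' a = 0) (bound : ∀ x ∈ Ico a (a + d), ‖f'' x‖ ≤ ε)
    {x : ℝ} (hx : x ∈ Ioo a (a + d)) : HasScaledC2BoundAt d (ε * d ^ 2) f x := by
  have hd : 0 ≤ d := by linarith [hx.1, hx.2]
  have bound' := norm_le_mul_of_norm_hasDerivWithinAt_le hf' ha' bound
  have bound₀ := norm_le_mul_of_norm_hasDerivWithinAt_le hf ha bound'
  have Ico_mem_nhds_of_mem {y : ℝ} (hy : y ∈ Ioo a (a + d)) : Ico a (a + d) ∈ 𝓝 y :=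
    Ico_mem_nhds hy.1 hy.2
  have hxI : x ∈ Ico a (a + d) := Ioo_subset_Ico_self hx
  refine .of_hasDerivAt
    (by filter_upwards [isOpen_Ioo.mem_nhds hx] with y hy
        exact (hf y (Ioo_subset_Ico_self hy)).hasDerivAt (Ico_mem_nhds_of_mem hy))
    ((hf' x hxI).hasDerivAt (Ico_mem_nhds_of_mem hx)) ?_ ?_ ?_
  · linarith [bound₀ x hxI]
  · linarith [mul_le_mul_of_nonneg_left (bound' x hxI) hd]
  · linarith [mul_le_mul_of_nonneg_left (bound x hxI) (sq_nonneg d)]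

end ScaledBound

section Sigmoid

lemma sigmoid_mul_one_sub_sigmoid_nonneg (u : ℝ) : 0 ≤ sigmoid u * (1 - sigmoid u) :=
  mul_nonneg (sigmoid_nonneg u) (sub_nonneg.2 (sigmoid_le_one u))

lemma sigmoid_mul_one_sub_sigmoid_le_exp_neg_abs (u : ℝ) :
    sigmoid u * (1 - sigmoid u) ≤ exp (-|u|) := by
  have le_exp_neg (v : ℝ) : sigmoid v * sigmoid (-v) ≤ exp (-v) := by
    calc sigmoid v * sigmoid (-v) = sigmoid v ^ 2 * exp (-v) := by
          rw [← sigmoid_mul_rexp_neg]; ring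
      _ ≤ exp (-v) := mul_le_of_le_one_left (exp_nonneg _)
          (pow_le_one₀ (sigmoid_nonneg v) (sigmoid_le_one v))
  rw [← sigmoid_neg]
  rcases abs_choice u with h | h <;> rw [h]
  · exact le_exp_neg u
  · simpa only [neg_neg, mul_comm] using le_exp_neg (-u)

lemma abs_add_pow_mul_sigmoid_mul_one_sub_sigmoid_le {c : ℝ} (hc : 0 ≤ c) (u : ℝ) (n : ℕ) :
    (|u| + c) ^ n * (sigmoid u * (1 - sigmoid u)) ≤ n ! * exp c := by
  have pow_le : (|u| + c) ^ n ≤ n ! * exp (|u| + c) := by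
    rw [← div_le_iff₀' (by positivity)]
    exact pow_div_factorial_le_exp _ (by positivity) n
  calc (|u| + c) ^ n * (sigmoid u * (1 - sigmoid u))
      ≤ n ! * exp (|u| + c) * exp (-|u|) :=
        mul_le_mul pow_le (sigmoid_mul_one_sub_sigmoid_le_exp_neg_abs u)
          (sigmoid_mul_one_sub_sigmoid_nonneg u) (by positivity)
    _ = n ! * exp c := by rw [mul_assoc, ← exp_add, add_neg_cancel_comm]

lemma abs_sigmoid_mul_one_sub_sigmoid_mul_le {c k q u : ℝ} {n : ℕ} (hc : 0 ≤ c) (hk : 0 ≤ k)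
    (hq : |q| ≤ k * (|u| + c) ^ n) :
    |sigmoid u * (1 - sigmoid u) * q| ≤ k * (n ! * exp c) := by
  have hp := sigmoid_mul_one_sub_sigmoid_nonneg u
  calc |sigmoid u * (1 - sigmoid u) * q| = sigmoid u * (1 - sigmoid u) * |q| := by
        rw [abs_mul, abs_of_nonneg hp]
    _ ≤ sigmoid u * (1 - sigmoid u) * (k * (|u| + c) ^ n) := mul_le_mul_of_nonneg_left hq hp
    _ = k * ((|u| + c) ^ n * (sigmoid u * (1 - sigmoid u))) := by ring
    _ ≤ k * (n ! * exp c) :=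
        mul_le_mul_of_nonneg_left (abs_add_pow_mul_sigmoid_mul_one_sub_sigmoid_le hc u n) hk

lemma abs_one_sub_two_mul_sigmoid_le_one (u : ℝ) : |1 - 2 * sigmoid u| ≤ 1 :=
  abs_le.2 ⟨by linarith [sigmoid_le_one u], by linarith [sigmoid_nonneg u]⟩

variable {u u' : ℝ → ℝ} {u'' t : ℝ}

lemma hasDerivAt_sigmoid_comp (hu : HasDerivAt u (u' t) t) :
    HasDerivAt (fun s => sigmoid (u s)) (sigmoid (u t) * (1 - sigmoid (u t)) * u' t) t :=
  (hasDerivAt_sigmoid (u t)).comp t hu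

lemma hasDerivAt_deriv_sigmoid_comp (hu : HasDerivAt u (u' t) t) (hu' : HasDerivAt u' u'' t) :
    HasDerivAt (fun s => sigmoid (u s) * (1 - sigmoid (u s)) * u' s)
      (sigmoid (u t) * (1 - sigmoid (u t)) * (u'' + (1 - 2 * sigmoid (u t)) * u' t ^ 2)) t := by
  have hσ := hasDerivAt_sigmoid_comp hu
  convert! (hσ.fun_mul (hσ.const_sub 1)).fun_mul hu' using 1
  ring

end Sigmoid

section UnitStep

/-- The exponent `-y` of the transition function with `x₁ = 0` and `Δx = 1`. -/
noncomputable def stepExponent (t : ℝ) : ℝ := (1 - t)⁻¹ - t⁻¹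

/-- The derivative of `stepExponent` off `{0, 1}`. -/
noncomputable def stepExponentDeriv (t : ℝ) : ℝ := (1 - t)⁻¹ ^ 2 + t⁻¹ ^ 2

/-- The second derivative of `stepExponent` off `{0, 1}`. -/
noncomputable def stepExponentDeriv₂ (t : ℝ) : ℝ := 2 * (1 - t)⁻¹ ^ 3 - 2 * t⁻¹ ^ 3

/-- The transition function with `x₁ = 0` and `Δx = 1`; only its values on `(0, 1)` are meaningful,
since it is not set to be constant outside. -/
noncomputable def unitStep (t : ℝ) : ℝ := sigmoid (stepExponent t)

/-- The derivative of `unitStep` off `{0, 1}`. -/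
noncomputable def unitStepDeriv (t : ℝ) : ℝ :=
  sigmoid (stepExponent t) * (1 - sigmoid (stepExponent t)) * stepExponentDeriv t

/-- The second derivative of `unitStep` off `{0, 1}`. -/
noncomputable def unitStepDeriv₂ (t : ℝ) : ℝ :=
  sigmoid (stepExponent t) * (1 - sigmoid (stepExponent t)) *
    (stepExponentDeriv₂ t + (1 - 2 * sigmoid (stepExponent t)) * stepExponentDeriv t ^ 2)

variable {t : ℝ}

lemma hasDerivAt_inv_pow (ht : t ≠ 0) (n : ℕ) :
    HasDerivAt (fun s : ℝ => s⁻¹ ^ n) (-(n * t⁻¹ ^ (n + 1))) t := by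
  convert! (hasDerivAt_inv ht).fun_pow n using 1
  cases n with
  | zero => simp
  | succ n => rw [Nat.add_sub_cancel]; ring

lemma hasDerivAt_one_sub_inv_pow (ht : t ≠ 1) (n : ℕ) :
    HasDerivAt (fun s : ℝ => (1 - s)⁻¹ ^ n) (n * (1 - t)⁻¹ ^ (n + 1)) t := by
  simpa only [neg_neg] using
    (hasDerivAt_inv_pow (sub_ne_zero.2 ht.symm) n).comp_const_sub 1 t

lemma hasDerivAt_stepExponent (h₀ : t ≠ 0) (h₁ : t ≠ 1) :
    HasDerivAt stepExponent (stepExponentDeriv t) t := by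
  simpa [stepExponent, stepExponentDeriv, funext_iff] using!
    (hasDerivAt_one_sub_inv_pow h₁ 1).fun_sub (hasDerivAt_inv_pow h₀ 1)

lemma hasDerivAt_stepExponentDeriv (h₀ : t ≠ 0) (h₁ : t ≠ 1) :
    HasDerivAt stepExponentDeriv (stepExponentDeriv₂ t) t := by
  convert! (hasDerivAt_one_sub_inv_pow h₁ 2).fun_add (hasDerivAt_inv_pow h₀ 2) using 1

lemma hasDerivAt_unitStep (h₀ : t ≠ 0) (h₁ : t ≠ 1) :
    HasDerivAt unitStep (unitStepDeriv t) t :=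
  hasDerivAt_sigmoid_comp (hasDerivAt_stepExponent h₀ h₁)

lemma hasDerivAt_unitStepDeriv (h₀ : t ≠ 0) (h₁ : t ≠ 1) :
    HasDerivAt unitStepDeriv (unitStepDeriv₂ t) t :=
  hasDerivAt_deriv_sigmoid_comp (hasDerivAt_stepExponent h₀ h₁)
    (hasDerivAt_stepExponentDeriv h₀ h₁)

lemma stepExponent_one_sub (t : ℝ) : stepExponent (1 - t) = -stepExponent t := by
  simp [stepExponent]

lemma inv_le_abs_stepExponent_add_two (t : ℝ) : t⁻¹ ≤ |stepExponent t| + 2 := by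
  have inv_le_two {s : ℝ} (hs : 1 / 2 ≤ s) : s⁻¹ ≤ 2 :=
    inv_le_of_inv_le₀ two_pos (by linarith)
  rcases le_total (1 / 2) t with h | h
  · linarith [inv_le_two h, abs_nonneg (stepExponent t)]
  · have neg_le : t⁻¹ - (1 - t)⁻¹ ≤ |stepExponent t| := by
      simpa only [stepExponent, neg_sub] using neg_le_abs (stepExponent t)
    linarith [inv_le_two (s := 1 - t) (by linarith)]

lemma inv_one_sub_le_abs_stepExponent_add_two (t : ℝ) : (1 - t)⁻¹ ≤ |stepExponent t| + 2 := by
  simpa only [stepExponent_one_sub, abs_neg] using inv_le_abs_stepExponent_add_two (1 - t)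

lemma abs_stepExponentDeriv_le (ht : t ∈ Icc (0 : ℝ) 1) :
    |stepExponentDeriv t| ≤ 2 * (|stepExponent t| + 2) ^ 2 := by
  have ha := pow_le_pow_left₀ (inv_nonneg.2 ht.1) (inv_le_abs_stepExponent_add_two t) 2
  have hb := pow_le_pow_left₀ (inv_nonneg.2 (sub_nonneg.2 ht.2))
    (inv_one_sub_le_abs_stepExponent_add_two t) 2
  rw [stepExponentDeriv, abs_of_nonneg (by positivity)]
  linarith

lemma abs_stepExponentDeriv₂_le (ht : t ∈ Icc (0 : ℝ) 1) :
    |stepExponentDeriv₂ t| ≤ 2 * (|stepExponent t| + 2) ^ 3 := by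
  have ha₀ : 0 ≤ t⁻¹ := inv_nonneg.2 ht.1
  have hb₀ : 0 ≤ (1 - t)⁻¹ := inv_nonneg.2 (sub_nonneg.2 ht.2)
  have ha := pow_le_pow_left₀ ha₀ (inv_le_abs_stepExponent_add_two t) 3
  have hb := pow_le_pow_left₀ hb₀ (inv_one_sub_le_abs_stepExponent_add_two t) 3
  rw [stepExponentDeriv₂, abs_le]
  constructor <;> linarith [pow_nonneg ha₀ 3, pow_nonneg hb₀ 3]

lemma abs_unitStepDeriv_le (ht : t ∈ Icc (0 : ℝ) 1) : |unitStepDeriv t| ≤ 4 * exp 2 := by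
  calc |unitStepDeriv t| ≤ 2 * (2 ! * exp 2) :=
        abs_sigmoid_mul_one_sub_sigmoid_mul_le zero_le_two zero_le_two (abs_stepExponentDeriv_le ht)
    _ = 4 * exp 2 := by norm_num [Nat.factorial]; ring

lemma abs_unitStepDeriv₂_le (ht : t ∈ Icc (0 : ℝ) 1) : |unitStepDeriv₂ t| ≤ 108 * exp 2 := by
  have sq_term_le : |(1 - 2 * sigmoid (stepExponent t)) * stepExponentDeriv t ^ 2| ≤
      4 * (|stepExponent t| + 2) ^ 4 := by
    calc |(1 - 2 * sigmoid (stepExponent t)) * stepExponentDeriv t ^ 2|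
        = |1 - 2 * sigmoid (stepExponent t)| * |stepExponentDeriv t| ^ 2 := by rw [abs_mul, abs_pow]
      _ ≤ 1 * (2 * (|stepExponent t| + 2) ^ 2) ^ 2 := by
          gcongr
          exacts [abs_one_sub_two_mul_sigmoid_le_one _, abs_stepExponentDeriv_le ht]
      _ = 4 * (|stepExponent t| + 2) ^ 4 := by ring
  have h₃ := abs_sigmoid_mul_one_sub_sigmoid_mul_le zero_le_two zero_le_two
    (abs_stepExponentDeriv₂_le ht)
  have h₄ := abs_sigmoid_mul_one_sub_sigmoid_mul_le zero_le_two zero_le_four sq_term_le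
  calc |unitStepDeriv₂ t| ≤ 2 * (3 ! * exp 2) + 4 * (4 ! * exp 2) := by
        rw [unitStepDeriv₂, mul_add]
        exact (abs_add_le _ _).trans (add_le_add h₃ h₄)
    _ = 108 * exp 2 := by norm_num [Nat.factorial]; ring

lemma hasScaledC2BoundAt_unitStep (ht : t ∈ Ioo (0 : ℝ) 1) :
    HasScaledC2BoundAt 1 (108 * exp 2) unitStep t := by
  have htI := Ioo_subset_Icc_self ht
  refine .of_hasDerivAt
    (by filter_upwards [isOpen_Ioo.mem_nhds ht] with s hs
        exact hasDerivAt_unitStep hs.1.ne' hs.2.ne)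
    (hasDerivAt_unitStepDeriv ht.1.ne' ht.2.ne) ?_ ?_ ?_
  · rw [norm_eq_abs, unitStep, abs_of_pos (sigmoid_pos _)]
    linarith [sigmoid_le_one (stepExponent t), one_le_exp zero_le_two]
  · rw [one_mul, norm_eq_abs]
    linarith [abs_unitStepDeriv_le htI, exp_pos 2]
  · rw [one_pow, one_mul, norm_eq_abs]
    exact abs_unitStepDeriv₂_le htI

end UnitStep

section Transition

variable {x₁ Δx x : ℝ}

lemma W_eq_unitStep (hx : x ∈ Ioo x₁ (x₁ + Δx)) : W x₁ Δx x = unitStep ((x - x₁) / Δx) := by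
  have hΔ : Δx ≠ 0 := by linarith [hx.1, hx.2]
  have one_sub : 1 - (x - x₁) / Δx = -(x - x₁ - Δx) / Δx := by field_simp; ring
  rw [W, if_neg hx.1.not_ge, if_pos hx.2, unitStep, stepExponent, sigmoid_def, one_sub, inv_div,
    inv_div, div_neg, one_div, add_comm (1 : ℝ)]
  ring_nf

lemma hasScaledC2BoundAt_W (hx : x ∈ Ioo x₁ (x₁ + Δx)) :
    HasScaledC2BoundAt Δx (108 * exp 2) (W x₁ Δx) x := by
  have hΔ : 0 < Δx := by linarith [hx.1, hx.2]
  have ht : (x - x₁) / Δx ∈ Ioo (0 : ℝ) 1 :=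
    ⟨div_pos (sub_pos.2 hx.1) hΔ, (div_lt_one hΔ).2 (sub_lt_iff_lt_add'.2 hx.2)⟩
  rw [← one_mul Δx]
  refine ((hasScaledC2BoundAt_unitStep ht).comp_sub_div hΔ).congr_of_eventuallyEq ?_
  filter_upwards [isOpen_Ioo.mem_nhds hx] with y hy
  simpa only [one_mul] using W_eq_unitStep hy

end Transition

theorem glued_function_bounds_general :
    ∃ C : ℝ, 0 < C ∧
      ∀ (E : Type*) [NormedAddCommGroup E] [NormedSpace ℝ E]
        (x₁ Δx ε : ℝ) (f f' f'' : ℝ → E),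
        (∀ x ∈ Ico x₁ (x₁ + Δx), HasDerivWithinAt f (f' x) (Ico x₁ (x₁ + Δx)) x) →
        (∀ x ∈ Ico x₁ (x₁ + Δx), HasDerivWithinAt f' (f'' x) (Ico x₁ (x₁ + Δx)) x) →
        f x₁ = 0 → f' x₁ = 0 → (∀ x ∈ Ico x₁ (x₁ + Δx), ‖f'' x‖ ≤ ε) →
        ∀ x ∈ Ioo x₁ (x₁ + Δx),
          ‖W x₁ Δx x • f x‖ ≤ C * ε * Δx ^ 2 ∧
          ‖deriv (fun x => W x₁ Δx x • f x) x‖ ≤ C * ε * Δx ∧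
          ‖deriv (deriv (fun x => W x₁ Δx x • f x)) x‖ ≤ C * ε := by
  refine ⟨4 * (108 * exp 2), by positivity, ?_⟩
  intro E _ _ x₁ Δx ε f f' f'' hf hf' hf₀ hf₁ hε x hx
  have hΔ : 0 < Δx := by linarith [hx.1, hx.2]
  have bound := (hasScaledC2BoundAt_W hx).smul hΔ.le
    (hasScaledC2BoundAt_of_norm_hasDerivWithinAt_le hf hf' hf₀ hf₁ hε hx)
  refine ⟨?_, le_of_mul_le_mul_left ?_ hΔ, le_of_mul_le_mul_left ?_ (pow_pos hΔ 2)⟩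
  · linarith [bound.norm_le]
  · linarith [bound.mul_norm_deriv_le]
  · linarith [bound.sq_mul_norm_deriv_deriv_le]

theorem glued_function_bounds :
    ∃ C : ℝ, 0 < C ∧
      ∀ (x₁ Δx ε : ℝ) (f₃ : ℝ → ℝ), 0 < Δx →
        ContDiff ℝ 2 f₃ → f₃ x₁ = 0 → deriv f₃ x₁ = 0 →
        (∀ x ∈ Set.Icc x₁ (x₁ + Δx), |deriv (deriv f₃) x| ≤ ε) →
        ∀ x ∈ Set.Ioo x₁ (x₁ + Δx),
          |f₃ x * W x₁ Δx x| ≤ C * ε * Δx ^ 2 ∧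
          |deriv (fun x => f₃ x * W x₁ Δx x) x| ≤ C * ε * Δx ∧
          |deriv (deriv (fun x => f₃ x * W x₁ Δx x)) x| ≤ C * ε := by
  obtain ⟨C, hC, bound⟩ := glued_function_bounds_general
  refine ⟨C, hC, fun x₁ Δx ε f₃ _ hf hf₀ hf₁ hε x hx => ?_⟩
  simpa only [smul_eq_mul, mul_comm (W _ _ _), norm_eq_abs] using
    bound ℝ x₁ Δx ε f₃ (deriv f₃) (deriv (deriv f₃))
      (fun y _ => (hf.differentiable two_ne_zero y).hasDerivAt.hasDerivWithinAt)
      (fun y _ => (hf.differentiable_deriv_two y).hasDerivAt.hasDerivWithinAt)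
      hf₀ hf₁ (fun y hy => hε y (Ico_subset_Icc_self hy)) x hx
end

section
/- Let δ > 0, β > 0, β̂ > 0 be real constants and let C > δβ/β̂. Define u(r) = 1 − exp(Cδ/r) for r < 0. Then for every r ∈ (−δ, 0) and all real numbers R ≥ 0, k > 0, P and Q satisfying P < β·k² and Q > β̂·k², one has R + (1 − u(r)^{−2})·P + 2·u(r)^{−2}·Q·(d/dr) log u(r) > R + 2·(k²/u(r)²)·((C·β̂/δ) − β)·exp(Cδ/r) > 0. -/
/-!
Put `e = exp (C δ / r) ∈ (0, 1)` and `u = 1 - e`. The coefficient `1 - u⁻²` of `P` is negative but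
at least `-2 e / u²`, because `(1 - u)² ≥ 0`; so the `P`-term costs less than `2 β k² e / u²`. The
logarithmic derivative of `u` exceeds `(C / δ) e`, because `r² < δ²` and `u < 1`; so the `Q`-term
contributes more than `2 (C β̂ / δ) k² e / u²`. The condition `C > δ β / β̂` says that the gain
outweighs the cost.
-/

open Real

theorem hasDerivAt_log_one_sub_exp_div {a r : ℝ} (ha : a ≠ 0) (hr : r ≠ 0) :
    HasDerivAt (fun r => Real.log (1 - Real.exp (a / r)))
      (a / r ^ 2 * Real.exp (a / r) / (1 - Real.exp (a / r))) r := by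
  have hu : 1 - Real.exp (a / r) ≠ 0 :=
    sub_ne_zero.2 fun h => div_ne_zero ha hr (Real.exp_eq_one_iff _ |>.1 h.symm)
  have hdiv : HasDerivAt (fun r : ℝ => a / r) (-a / r ^ 2) r := by
    simpa [div_eq_mul_inv] using (hasDerivAt_inv hr).const_mul a
  convert (hdiv.exp.const_sub 1).log hu using 1
  ring

theorem exp_div_lt_one {a r : ℝ} (ha : 0 < a) (hr : r < 0) : Real.exp (a / r) < 1 :=
  Real.exp_lt_one_iff.2 (div_neg_of_pos_of_neg ha hr)

theorem div_sq_mul_exp_div_lt_deriv_log {a r : ℝ} (ha : 0 < a) (hr : r < 0) :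
    a / r ^ 2 * Real.exp (a / r) < deriv (fun r => Real.log (1 - Real.exp (a / r))) r := by
  rw [(hasDerivAt_log_one_sub_exp_div ha.ne' hr.ne).deriv]
  have hr2 : 0 < r ^ 2 := sq_pos_of_neg hr
  rw [lt_div_iff₀ (sub_pos.2 (exp_div_lt_one ha hr))]
  exact mul_lt_of_lt_one_right (by positivity) (sub_lt_self 1 (Real.exp_pos _))

theorem div_mul_exp_div_lt_deriv_log {C δ r : ℝ} (hC : 0 < C) (hr₁ : -δ ≤ r) (hr₂ : r < 0) :
    C / δ * Real.exp (C * δ / r) <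
      deriv (fun r => Real.log (1 - Real.exp (C * δ / r))) r := by
  have hδ : 0 < δ := by linarith
  have hr2 : 0 < r ^ 2 := sq_pos_of_neg hr₂
  have hsq : r ^ 2 ≤ δ ^ 2 := sq_le_sq' hr₁ (by linarith)
  calc C / δ * Real.exp (C * δ / r)
      = C * δ / δ ^ 2 * Real.exp (C * δ / r) := by field_simp
    _ ≤ C * δ / r ^ 2 * Real.exp (C * δ / r) := by gcongr
    _ < _ := div_sq_mul_exp_div_lt_deriv_log (mul_pos hC hδ) hr₂

theorem neg_two_mul_one_sub_div_sq_le {u : ℝ} (hu : u ≠ 0) :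
    -(2 * (1 - u) / u ^ 2) ≤ 1 - u ^ (-2 : ℤ) := by
  have hgap : 1 - u ^ (-2 : ℤ) + 2 * (1 - u) / u ^ 2 = (1 - u) ^ 2 / u ^ 2 := by
    field_simp
    ring
  have hnonneg : 0 ≤ (1 - u) ^ 2 / u ^ 2 := by positivity
  linarith

theorem neg_lt_one_sub_zpow_neg_two_mul {u B P : ℝ} (hu₀ : 0 < u) (hu₁ : u < 1) (hB : 0 ≤ B)
    (hP : P < B) : -(2 * (1 - u) / u ^ 2) * B < (1 - u ^ (-2 : ℤ)) * P := by
  have hcoeff : 1 - u ^ (-2 : ℤ) < 0 :=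
    sub_neg.2 (one_lt_zpow_of_neg₀ hu₀ hu₁ (by norm_num))
  calc -(2 * (1 - u) / u ^ 2) * B
      ≤ (1 - u ^ (-2 : ℤ)) * B :=
        mul_le_mul_of_nonneg_right (neg_two_mul_one_sub_div_sq_le hu₀.ne') hB
    _ < (1 - u ^ (-2 : ℤ)) * P := mul_lt_mul_of_neg_left hP hcoeff

/-- Here `K` stands for `k²`, `L` for the logarithmic derivative of `u`, and `c` for `C / δ`. -/
theorem deformed_curvature_lower_bound {u β βhat c K L P Q : ℝ} (R : ℝ) (hu₀ : 0 < u)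
    (hu₁ : u < 1) (hβ : 0 ≤ β) (hβhat : 0 ≤ βhat) (hc : 0 ≤ c) (hK : 0 ≤ K)
    (hP : P < β * K) (hQ : βhat * K < Q) (hL : c * (1 - u) < L) :
    R + 2 * (K / u ^ 2) * (c * βhat - β) * (1 - u) <
      R + (1 - u ^ (-2 : ℤ)) * P + 2 * u ^ (-2 : ℤ) * Q * L := by
  have hPterm : -(2 * (1 - u) / u ^ 2) * (β * K) < (1 - u ^ (-2 : ℤ)) * P :=
    neg_lt_one_sub_zpow_neg_two_mul hu₀ hu₁ (mul_nonneg hβ hK) hP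
  have hQL : βhat * K * (c * (1 - u)) < Q * L :=
    mul_lt_mul'' hQ hL (mul_nonneg hβhat hK) (mul_nonneg hc (sub_pos.2 hu₁).le)
  calc R + 2 * (K / u ^ 2) * (c * βhat - β) * (1 - u)
      = R + -(2 * (1 - u) / u ^ 2) * (β * K) +
          2 * u ^ (-2 : ℤ) * (βhat * K * (c * (1 - u))) := by
        field_simp
        ring
    _ < R + (1 - u ^ (-2 : ℤ)) * P + 2 * u ^ (-2 : ℤ) * (Q * L) := by gcongr
    _ = R + (1 - u ^ (-2 : ℤ)) * P + 2 * u ^ (-2 : ℤ) * Q * L := by ring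

theorem deformed_Ricci_positive (δ β βhat C : ℝ)
    (hδ : 0 < δ) (hβ : 0 < β) (hβhat : 0 < βhat) (hC : C > δ * β / βhat) :
    ∀ r ∈ Set.Ioo (-δ) (0 : ℝ), ∀ R k P Q : ℝ,
      R ≥ 0 → 0 < k → P < β * k ^ 2 → Q > βhat * k ^ 2 →
      (R + (1 - (1 - Real.exp (C * δ / r)) ^ (-2 : ℤ)) * P +
          2 * (1 - Real.exp (C * δ / r)) ^ (-2 : ℤ) * Q *
            deriv (fun r => Real.log (1 - Real.exp (C * δ / r))) r >
        R + 2 * (k ^ 2 / (1 - Real.exp (C * δ / r)) ^ 2) *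
          ((C * βhat / δ) - β) * Real.exp (C * δ / r)) ∧
      (R + 2 * (k ^ 2 / (1 - Real.exp (C * δ / r)) ^ 2) *
          ((C * βhat / δ) - β) * Real.exp (C * δ / r) > 0) := by
  intro r ⟨hr₁, hr₂⟩ R k P Q hR hk hP hQ
  have hC₀ : 0 < C := lt_trans (by positivity) hC
  have hu₀ : 0 < 1 - Real.exp (C * δ / r) := sub_pos.2 (exp_div_lt_one (mul_pos hC₀ hδ) hr₂)
  constructor
  · have hu₁ : 1 - Real.exp (C * δ / r) < 1 := sub_lt_self 1 (Real.exp_pos _)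
    have hlog := div_mul_exp_div_lt_deriv_log hC₀ hr₁.le hr₂
    simpa only [sub_sub_cancel, ← mul_div_right_comm] using
      deformed_curvature_lower_bound R hu₀ hu₁ hβ.le hβhat.le (div_pos hC₀ hδ).le
        (sq_nonneg k) hP hQ (by rwa [sub_sub_cancel])
  · have hgain : 0 < C * βhat / δ - β := by
      rw [sub_pos, lt_div_iff₀' hδ]
      exact (div_lt_iff₀ hβhat).1 hC
    positivity
end
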